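/- Case u = m, n = 2m. Let W be a 𝒲-valued random variable jointly distributed with (Z̃,U), and suppose 0 ≤ r(ŷ, y) ≤ B for all ŷ ∈ ℝ^K and y ∈ 𝒴. For each i define the prediction pair F_i := ( f(W, x(Z̃_{i,0})), f(W, x(Z̃_{i,1})) ) ∈ ℝ^K × ℝ^K. Then | E_{W,Z̃,U}[ R_test(W,Z̃,U) − R_train(W,Z̃,U) ] | ≤ (B/m) · Σ_{i=1}^m E_{Z̃}[ sqrt( 2 · I^{Z̃}(F_i ; U_i) ) ]. -/

import Mathlib

/-!
Conditionally on `Z̃ = z̃`, the labels are constants and `U_i` is still a fair bit, so the `i`-th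
term of the generalization gap is `± d(F_i)`, where `d` is a difference of two losses, bounded by
`B`, and the sign is given by `U_i`. Under the product of the conditional marginal laws of `F_i` and
`U_i` this term is centred, hence sub-Gaussian with variance proxy `B²` by Hoeffding's lemma; the
Donsker–Varadhan inequality then bounds its mean under the joint law by `B √(2 I^{z̃}(F_i; U_i))`
(`abs_integral_le_mul_sqrt_klDivR`, `abs_integral_signed_le`). Since `U_i` is a fair bit, the joint
law is at most twice the product law, so the divergence is finite and its integral formula is
meaningful. Averaging over `z̃` (`abs_integral_le_of_fibres`) and summing over `i` gives the bound.
-/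

open MeasureTheory ProbabilityTheory Real
open scoped ENNReal

noncomputable section

/-- The map sending `(i, b)` to the `b`-th component of the `i`-th pair of a
candidate supersample. -/
def pairMap (m : ℕ) (zt : Fin m → Fin (2 * m) × Fin (2 * m)) :
    Fin m × Bool → Fin (2 * m) :=
  fun p => if p.2 then (zt p.1).2 else (zt p.1).1

/-- A transductive supersample: a sequence of `m` pairwise disjoint ascending
pairs covering `Fin (2m)`. -/
def IsSupersample (m : ℕ) (zt : Fin m → Fin (2 * m) × Fin (2 * m)) : Prop :=
  (∀ i, (zt i).1 < (zt i).2) ∧ Function.Bijective (pairMap m zt)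

instance (m : ℕ) : DecidablePred (IsSupersample m) := fun zt =>
  inferInstanceAs
    (Decidable ((∀ i, (zt i).1 < (zt i).2) ∧ Function.Bijective (pairMap m zt)))

/-- Transductive training error for a supersample `zt` and selector `u`:
`R_train(w, z̃, u) = (1/m)·Σ_i ℓ(w, s(z̃_{i, u_i}))` (`u i = false` selects the
first component, `u i = true` the second). -/
def RtrainSS {S W : Type*} (m : ℕ) (s : Fin (2 * m) → S) (ℓ : W → S → ℝ) (w : W)
    (zt : Fin m → Fin (2 * m) × Fin (2 * m)) (u : Fin m → Bool) : ℝ :=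
  (∑ i : Fin m, ℓ w (s (if u i then (zt i).2 else (zt i).1))) / m

/-- Transductive test error for a supersample `zt` and selector `u`:
`R_test(w, z̃, u) = (1/m)·Σ_i ℓ(w, s(z̃_{i, 1−u_i}))`. -/
def RtestSS {S W : Type*} (m : ℕ) (s : Fin (2 * m) → S) (ℓ : W → S → ℝ) (w : W)
    (zt : Fin m → Fin (2 * m) × Fin (2 * m)) (u : Fin m → Bool) : ℝ :=
  (∑ i : Fin m, ℓ w (s (if u i then (zt i).1 else (zt i).2))) / m

/-- Kullback–Leibler divergence `D_KL(μ ‖ ν) = ∫ log(dμ/dν) dμ`. -/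
def klDivR {α : Type*} [MeasurableSpace α] (μ ν : Measure α) : ℝ :=
  ∫ x, llr μ ν x ∂μ

/-- Disintegrated mutual information given the event `A`: the KL divergence
between the conditional joint law of `(X, Y)` given `A` and the product of the
corresponding conditional marginal laws. -/
def condMI {Ω α β : Type*} [MeasurableSpace Ω] [MeasurableSpace α] [MeasurableSpace β]
    (μ : Measure Ω) (X : Ω → α) (Y : Ω → β) (A : Set Ω) : ℝ :=
  klDivR (Measure.map (fun ω => (X ω, Y ω)) (μ[|A]))
    ((Measure.map X (μ[|A])).prod (Measure.map Y (μ[|A])))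

/-- Donsker–Varadhan combined with Hoeffding's lemma: a bounded function that is centred under `Q`
has `P`-mean at most `B √(2 KL(P‖Q))`. The domination `P ≤ 2 Q` guarantees that the log-likelihood
ratio is `P`-integrable, so that `klDivR` is the genuine divergence and not a junk value. -/
lemma abs_integral_le_mul_sqrt_klDivR {α : Type*} [MeasurableSpace α] (P Q : Measure α)
    [IsProbabilityMeasure P] [IsProbabilityMeasure Q] (hPQ : P ≤ (2 : ℝ≥0∞) • Q)
    {g : α → ℝ} (hg : Measurable g) {B : ℝ} (hB : 0 < B) (hgB : ∀ x, |g x| ≤ B)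
    (hg0 : ∫ x, g x ∂Q = 0) :
    |∫ x, g x ∂P| ≤ B * √(2 * klDivR P Q) := by
  have hac : P ≪ Q := (Measure.absolutelyContinuous_of_le hPQ).trans
    (Measure.smul_absolutelyContinuous)
  have hrn : ∀ᵐ x ∂Q, P.rnDeriv Q x ≤ 2 := by
    refine ae_le_of_forall_setLIntegral_le_of_sigmaFinite (Measure.measurable_rnDeriv P Q) ?_
    intro t ht _
    calc ∫⁻ x in t, P.rnDeriv Q x ∂Q ≤ P t := Measure.setLIntegral_rnDeriv_le t
      _ ≤ ((2 : ℝ≥0∞) • Q) t := hPQ t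
      _ = ∫⁻ _ in t, 2 ∂Q := by simp
  have hint : Integrable (llr P Q) P := by
    rw [← InformationTheory.integrable_klFun_rnDeriv_iff hac]
    refine Integrable.of_bound (C := 1)
      (InformationTheory.measurable_klFun.comp
        (Measure.measurable_rnDeriv P Q).ennreal_toReal).aestronglyMeasurable ?_
    filter_upwards [hrn] with x hx
    have h0 : 0 ≤ (P.rnDeriv Q x).toReal := ENNReal.toReal_nonneg
    have h2 : (P.rnDeriv Q x).toReal ≤ 2 := by
      simpa using ENNReal.toReal_mono (by simp) hx
    rw [Real.norm_of_nonneg (InformationTheory.klFun_nonneg h0), InformationTheory.klFun_apply]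
    rcases h0.eq_or_lt with h | h
    · simp [← h]
    · nlinarith [mul_le_mul_of_nonneg_left (Real.log_le_sub_one_of_pos h) h0]
  have hsub := hasSubgaussianMGF_of_mem_Icc_of_integral_eq_zero (μ := Q) (a := -B) (b := B)
    hg.aemeasurable (ae_of_all _ fun x => abs_le.mp (hgB x)) hg0
  have hc : (((‖B - -B‖₊ / 2) ^ 2 : NNReal) : ℝ) = B ^ 2 := by
    push_cast
    rw [Real.norm_of_nonneg (by linarith)]
    ring
  have hgP : Integrable g P := Integrable.of_bound hg.aestronglyMeasurable B (ae_of_all _ hgB)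
  -- Gibbs' inequality for `P` against the exponential tilting of `Q` by `t g`.
  have hDV (t : ℝ) : t * ∫ x, g x ∂P ≤ klDivR P Q + B ^ 2 * t ^ 2 / 2 := by
    have hexp := hsub.integrable_exp_mul t
    have hfP : Integrable (fun x => t * g x) P := hgP.const_mul t
    have : IsProbabilityMeasure (Q.tilted fun x => t * g x) := isProbabilityMeasure_tilted hexp
    have hnn := InformationTheory.integral_llr_add_sub_measure_univ_nonneg
      (hac.trans (absolutelyContinuous_tilted hexp))
      (integrable_llr_tilted_right hac hfP hint hexp)
    rw [integral_llr_tilted_right hac hfP hexp hint, integral_const_mul] at hnn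
    have hmgf := hsub.mgf_le t
    rw [hc] at hmgf
    have hlog : Real.log (∫ x, Real.exp (t * g x) ∂Q) ≤ B ^ 2 * t ^ 2 / 2 :=
      (Real.log_le_iff_le_exp (integral_exp_pos hexp)).mpr hmgf
    simp only [probReal_univ] at hnn
    unfold klDivR
    linarith
  set a := ∫ x, g x ∂P
  -- The optimal parameter is `t = a / B²`.
  have hopt := hDV (a / B ^ 2)
  have hsq : a ^ 2 ≤ B ^ 2 * (2 * klDivR P Q) := by
    field_simp at hopt
    nlinarith
  calc |a| = √(a ^ 2) := (Real.sqrt_sq_eq_abs a).symm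
    _ ≤ √(B ^ 2 * (2 * klDivR P Q)) := Real.sqrt_le_sqrt hsq
    _ = B * √(2 * klDivR P Q) := by rw [Real.sqrt_mul (by positivity), Real.sqrt_sq hB.le]

/-- If `V` is a fair bit, a function of `F` whose sign is flipped by `V` has mean controlled by the
mutual information of `F` and `V`. The joint law is at most twice the product of the marginals. -/
lemma abs_integral_signed_le {Ω α : Type*} [MeasurableSpace Ω] [MeasurableSpace α]
    (ν : Measure Ω) [IsProbabilityMeasure ν] {F : Ω → α} (hF : Measurable F)
    {V : Ω → Bool} (hV : Measurable V) (hVu : ∀ b, ν (V ⁻¹' {b}) = 2⁻¹)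
    {d : α → ℝ} (hd : Measurable d) {B : ℝ} (hB : 0 < B) (hdB : ∀ x, |d x| ≤ B) :
    |∫ ω, (if V ω then -d (F ω) else d (F ω)) ∂ν| ≤
      B * √(2 * klDivR (ν.map fun ω => (F ω, V ω)) ((ν.map F).prod (ν.map V))) := by
  have hFV : Measurable fun ω => (F ω, V ω) := hF.prodMk hV
  have hP1 := Measure.isProbabilityMeasure_map (μ := ν) hFV.aemeasurable
  have hP2 := Measure.isProbabilityMeasure_map (μ := ν) hF.aemeasurable
  have hP3 := Measure.isProbabilityMeasure_map (μ := ν) hV.aemeasurable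
  have hVm (b : Bool) : (ν.map V) {b} = 2⁻¹ := by
    rw [Measure.map_apply hV (measurableSet_singleton b), hVu]
  let g : α × Bool → ℝ := fun p => if p.2 then -d p.1 else d p.1
  have hg : Measurable g :=
    Measurable.ite (measurable_snd (measurableSet_singleton true))
      (hd.comp measurable_fst).neg (hd.comp measurable_fst)
  have hgB (p : α × Bool) : |g p| ≤ B := by
    simp only [g]
    split_ifs
    · simpa using hdB p.1
    · exact hdB p.1
  have key := abs_integral_le_mul_sqrt_klDivR (ν.map fun ω => (F ω, V ω))
    ((ν.map F).prod (ν.map V)) ?_ hg hB hgB ?_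
  · rwa [integral_map hFV.aemeasurable hg.aestronglyMeasurable] at key
  · refine Measure.le_iff.mpr fun A hA => ?_
    have hA' (b : Bool) : MeasurableSet ((fun x => (x, b)) ⁻¹' A) :=
      measurable_prodMk_right hA
    rw [Measure.smul_apply, Measure.prod_apply_symm hA, lintegral_fintype,
      Measure.map_apply hFV hA]
    simp only [Fintype.sum_bool, hVm, Measure.map_apply hF (hA' _), smul_eq_mul]
    rw [← add_mul, mul_comm (_ + _), ← mul_assoc,
      ENNReal.mul_inv_cancel (by simp) (by simp), one_mul]
    refine (measure_mono ?_).trans (measure_union_le _ _)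
    intro ω hω
    cases h : V ω <;> simp_all
  · rw [integral_prod _ (Integrable.of_bound hg.aestronglyMeasurable B (ae_of_all _ hgB))]
    refine integral_eq_zero_of_ae (ae_of_all _ fun x => ?_)
    simp [integral_fintype, g, measureReal_def, hVm]

/-- The coordinates of a uniform element of `{0,1}^m` are fair bits, also conditionally on an
event independent of it. -/
lemma cond_coord_eq_half {Ω ζ : Type*} [MeasurableSpace Ω] [MeasurableSpace ζ]
    [MeasurableSingletonClass ζ] {m : ℕ} (μ : Measure Ω) [IsProbabilityMeasure μ]
    {Z : Ω → ζ} {U : Ω → Fin m → Bool} (hZ : Measurable Z) (hUm : Measurable U)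
    (hU : ∀ v : Fin m → Bool, μ (U ⁻¹' {v}) = ((2 ^ m : ℕ) : ℝ≥0∞)⁻¹)
    (hind : IndepFun Z U μ) (z : ζ) (hz : μ (Z ⁻¹' {z}) ≠ 0) (i : Fin m) (b : Bool) :
    μ[|Z ⁻¹' {z}] ((fun ω => U ω i) ⁻¹' {b}) = 2⁻¹ := by
  have hs (b : Bool) : (fun ω => U ω i) ⁻¹' {b} =
      U ⁻¹' ((Finset.univ.filter fun v : Fin m → Bool => v i = b : Finset _) : Set _) := by
    ext; simp
  have hcount (b : Bool) : μ ((fun ω => U ω i) ⁻¹' {b}) =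
      (Finset.univ.filter fun v : Fin m → Bool => v i = b).card * ((2 ^ m : ℕ) : ℝ≥0∞)⁻¹ := by
    rw [hs, ← sum_measure_preimage_singleton _ fun v _ => hUm (measurableSet_singleton v)]
    simp [hU]
  -- Flipping the `i`-th bit exchanges the two events.
  have hcard (b : Bool) : (Finset.univ.filter fun v : Fin m → Bool => v i = b).card =
      (Finset.univ.filter fun v : Fin m → Bool => v i = !b).card := by
    refine Finset.card_nbij' (fun v => Function.update v i (!v i))
      (fun v => Function.update v i (!v i)) ?_ ?_ ?_ ?_ <;> intro v hv <;> simp_all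
  have hUi : Measurable fun ω => U ω i := (measurable_pi_apply i).comp hUm
  have hhalf : μ ((fun ω => U ω i) ⁻¹' {b}) = 2⁻¹ := by
    have heq : μ ((fun ω => U ω i) ⁻¹' {!b}) = μ ((fun ω => U ω i) ⁻¹' {b}) := by
      rw [hcount, hcount, ← hcard]
    have hcompl : ((fun ω => U ω i) ⁻¹' {b})ᶜ = (fun ω => U ω i) ⁻¹' {!b} := by
      ext ω; cases b <;> simp
    have hsum := measure_add_measure_compl (μ := μ) (hUi (measurableSet_singleton b))
    rw [hcompl, heq, measure_univ, ← two_mul] at hsum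
    exact ENNReal.eq_inv_of_mul_eq_one_left (by rwa [mul_comm])
  have hZs := hZ (measurableSet_singleton z)
  have hprod := hind.measure_inter_preimage_eq_mul {z}
    ((Finset.univ.filter fun v : Fin m → Bool => v i = b : Finset _) : Set _)
    (measurableSet_singleton z) (Set.Finite.measurableSet (Finset.finite_toSet _))
  rw [← hs] at hprod
  rw [cond_apply hZs, hprod, hhalf, ← mul_assoc,
    ENNReal.inv_mul_cancel hz (measure_ne_top _ _), one_mul]

/-- Bounds on the conditional means given each value of a finite-valued `Z` average to a bound on
the mean. -/
lemma abs_integral_le_of_fibres {Ω ζ : Type*} [MeasurableSpace Ω] [MeasurableSpace ζ]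
    [Fintype ζ] [MeasurableSingletonClass ζ] (μ : Measure Ω) [IsProbabilityMeasure μ]
    {Z : Ω → ζ} (hZ : Measurable Z) {G : Ω → ℝ} (hG : Integrable G μ) (c : ζ → ℝ)
    (h : ∀ z, μ (Z ⁻¹' {z}) ≠ 0 → |∫ ω, G ω ∂(μ[|Z ⁻¹' {z}])| ≤ c z) :
    |∫ ω, G ω ∂μ| ≤ ∫ ω, c (Z ω) ∂μ := by
  have hZs (z : ζ) : MeasurableSet (Z ⁻¹' {z}) := hZ (measurableSet_singleton z)
  have hc : Measurable c := measurable_of_finite c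
  have hcint : Integrable (fun ω => c (Z ω)) μ :=
    (Integrable.of_finite (μ := μ.map Z) (f := c)).comp_measurable hZ
  have hdec {H : Ω → ℝ} (hH : Integrable H μ) :
      ∫ ω, H ω ∂μ = ∑ z, ∫ ω in Z ⁻¹' {z}, H ω ∂μ := by
    rw [← integral_iUnion_fintype hZs ?_ fun z => hH.integrableOn]
    · rw [← Set.preimage_iUnion, Set.iUnion_of_singleton, Set.preimage_univ, setIntegral_univ]
    · intro z z' hzz
      exact Disjoint.preimage Z (by simpa using hzz)
  rw [hdec hG, hdec hcint]
  refine (Finset.abs_sum_le_sum_abs _ _).trans (Finset.sum_le_sum fun z _ => ?_)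
  by_cases hz : μ (Z ⁻¹' {z}) = 0
  · simp [Measure.restrict_eq_zero.mpr hz]
  have hpos : 0 < μ.real (Z ⁻¹' {z}) := ENNReal.toReal_pos hz (measure_ne_top _ _)
  have hfib := h z hz
  rw [ProbabilityTheory.cond, integral_smul_measure, ENNReal.toReal_inv, smul_eq_mul, abs_mul,
    abs_of_nonneg (by positivity), ← measureReal_def, inv_mul_le_iff₀ hpos] at hfib
  refine hfib.trans_eq ?_
  rw [setIntegral_congr_fun (g := fun _ => c z) (hZs z) fun ω hω => by
    simp only [Set.mem_preimage, Set.mem_singleton_iff] at hω; simp [hω]]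
  simp

theorem statement9 {Ω X Y 𝒲 : Type*} [MeasurableSpace Ω] [MeasurableSpace X]
    [MeasurableSpace Y] [MeasurableSpace 𝒲]
    (m K : ℕ) (hm : 1 ≤ m)
    (s : Fin (2 * m) → X × Y) (B : ℝ) (hB : 0 < B)
    -- the model prediction map and the criterion
    (f : 𝒲 → X → (Fin K → ℝ)) (hfmeas : Measurable fun p : 𝒲 × X => f p.1 p.2)
    (r : (Fin K → ℝ) → Y → ℝ) (hrmeas : Measurable fun p : (Fin K → ℝ) × Y => r p.1 p.2)
    (hr : ∀ (yh : Fin K → ℝ) (y : Y), 0 ≤ r yh y ∧ r yh y ≤ B)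
    (μ : Measure Ω) [IsProbabilityMeasure μ]
    (W : Ω → 𝒲) (Zt : Ω → (Fin m → Fin (2 * m) × Fin (2 * m))) (U : Ω → (Fin m → Bool))
    (hWm : Measurable W) (hZtm : Measurable Zt) (hUm : Measurable U)
    -- Z̃ is uniformly distributed on the set of transductive supersamples
    (hZt : ∀ zt, μ (Zt ⁻¹' {zt}) =
      if IsSupersample m zt
        then ((Finset.univ.filter (IsSupersample m)).card : ℝ≥0∞)⁻¹ else 0)
    -- U is uniformly distributed on {0,1}^m
    (hU : ∀ v : Fin m → Bool, μ (U ⁻¹' {v}) = ((2 ^ m : ℕ) : ℝ≥0∞)⁻¹)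
    -- Z̃ and U are independent
    (hIndep : IndepFun Zt U μ) :
    |∫ ω, (RtestSS m s (fun w p => r (f w p.1) p.2) (W ω) (Zt ω) (U ω)
        - RtrainSS m s (fun w p => r (f w p.1) p.2) (W ω) (Zt ω) (U ω)) ∂μ|
      ≤ (B / m) * ∑ i : Fin m, ∫ ω, Real.sqrt (2 *
          condMI μ
            (fun ω' => (f (W ω') (s ((Zt ω' i).1)).1, f (W ω') (s ((Zt ω' i).2)).1))
            (fun ω' => U ω' i) (Zt ⁻¹' {Zt ω})) ∂μ := by
  have hm0 : (0 : ℝ) < m := by exact_mod_cast hm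
  let l : Ω → Fin (2 * m) → ℝ := fun ω j => r (f (W ω) (s j).1) (s j).2
  -- the contribution of the `i`-th pair to the generalization gap
  let G : Fin m → Ω → ℝ := fun i ω =>
    if U ω i then -(l ω (Zt ω i).2 - l ω (Zt ω i).1) else l ω (Zt ω i).2 - l ω (Zt ω i).1
  have hs : Measurable s := measurable_of_finite s
  have hj1 (i : Fin m) : Measurable fun ω => s (Zt ω i).1 :=
    hs.comp (measurable_fst.comp ((measurable_pi_apply i).comp hZtm))
  have hj2 (i : Fin m) : Measurable fun ω => s (Zt ω i).2 :=
    hs.comp (measurable_snd.comp ((measurable_pi_apply i).comp hZtm))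
  have hf1 (i : Fin m) : Measurable fun ω => f (W ω) (s (Zt ω i).1).1 :=
    hfmeas.comp (hWm.prodMk (hj1 i).fst)
  have hf2 (i : Fin m) : Measurable fun ω => f (W ω) (s (Zt ω i).2).1 :=
    hfmeas.comp (hWm.prodMk (hj2 i).fst)
  have hUi (i : Fin m) : Measurable fun ω => U ω i := (measurable_pi_apply i).comp hUm
  have hdiff (i : Fin m) : Measurable fun ω => l ω (Zt ω i).2 - l ω (Zt ω i).1 :=
    (hrmeas.comp ((hf2 i).prodMk (hj2 i).snd)).sub (hrmeas.comp ((hf1 i).prodMk (hj1 i).snd))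
  have hbd (y₁ y₂ : Fin K → ℝ) (z₁ z₂ : Y) : |r y₂ z₂ - r y₁ z₁| ≤ B := by
    have h1 := hr y₁ z₁
    have h2 := hr y₂ z₂
    rw [abs_le]
    constructor <;> linarith
  have hGm (i : Fin m) : Measurable (G i) :=
    Measurable.ite (hUi i (measurableSet_singleton true)) (hdiff i).neg (hdiff i)
  have hGint (i : Fin m) : Integrable (G i) μ := by
    refine Integrable.of_bound (hGm i).aestronglyMeasurable B (ae_of_all _ fun ω => ?_)
    simp only [G, Real.norm_eq_abs]
    split_ifs
    · rw [abs_neg]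
      exact hbd _ _ _ _
    · exact hbd _ _ _ _
  have hgap (ω : Ω) : RtestSS m s (fun w p => r (f w p.1) p.2) (W ω) (Zt ω) (U ω)
      - RtrainSS m s (fun w p => r (f w p.1) p.2) (W ω) (Zt ω) (U ω) = (∑ i, G i ω) / m := by
    rw [RtestSS, RtrainSS, ← sub_div, ← Finset.sum_sub_distrib]
    congr 1
    refine Finset.sum_congr rfl fun i _ => ?_
    simp only [G, l]
    split_ifs <;> ring
  have hpair (i : Fin m) : |∫ ω, G i ω ∂μ| ≤ ∫ ω, B * √(2 * condMI μ
      (fun ω' => (f (W ω') (s ((Zt ω' i).1)).1, f (W ω') (s ((Zt ω' i).2)).1))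
      (fun ω' => U ω' i) (Zt ⁻¹' {Zt ω})) ∂μ := by
    refine abs_integral_le_of_fibres μ hZtm (hGint i) (fun z => B * √(2 * condMI μ
      (fun ω' => (f (W ω') (s ((Zt ω' i).1)).1, f (W ω') (s ((Zt ω' i).2)).1))
      (fun ω' => U ω' i) (Zt ⁻¹' {z}))) fun z hz => ?_
    have : IsProbabilityMeasure (μ[|Zt ⁻¹' {z}]) := cond_isProbabilityMeasure hz
    -- With `Zt = z` fixed, the labels are constants and the gap is a function of `(F_i, U_i)`.
    let d : (Fin K → ℝ) × (Fin K → ℝ) → ℝ := fun a => r a.2 (s (z i).2).2 - r a.1 (s (z i).1).2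
    have hd : Measurable d :=
      (hrmeas.comp (measurable_snd.prodMk measurable_const)).sub
        (hrmeas.comp (measurable_fst.prodMk measurable_const))
    have hmain := abs_integral_signed_le (μ[|Zt ⁻¹' {z}]) ((hf1 i).prodMk (hf2 i)) (hUi i)
      (cond_coord_eq_half μ hZtm hUm hU hIndep z hz i) hd hB fun a => hbd _ _ _ _
    refine le_trans (le_of_eq ?_) hmain
    congr 1
    refine integral_congr_ae ?_
    filter_upwards [ae_cond_mem (hZtm (measurableSet_singleton z))] with ω hω
    have hω' : Zt ω = z := hω
    simp only [G, d, l, hω']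
  simp_rw [hgap]
  rw [integral_div, integral_finsetSum _ fun i _ => hGint i, abs_div, abs_of_pos hm0,
    div_mul_eq_mul_div, Finset.mul_sum]
  gcongr
  refine (Finset.abs_sum_le_sum_abs _ _).trans (Finset.sum_le_sum fun i _ => ?_)
  rw [← integral_const_mul]
  exact hpair i

end
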